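/- arXiv:1312.2170 — 3 statements merged into one kernel-verified Lean document; each statement's English description precedes it below -/
import Mathlib

section
/- Let n ≥ 3, let ω = s_{i_1} s_{i_2} ⋯ s_{i_k} be a reduced subword of Ω_n, and let σ ∈ S_n be the permutation represented by ω. If σ s_{n−1} ≤ v_n in the Bruhat order and s_{n−1} ∈ D_R(σ), then there exists a reduced expression ω′ of σ s_{n−1} such that ω′ is a subword of Ω_n and d(ω′) = d(ω). -/
/-!
The letter `s_{n-1}` occurs only once in `Ω_n = Ω_{n-1} s_{n-1} s_{n-2}`, so a subword is
`ω = α τ` with `α` a subword of `Ω_{n-1}` and `τ` a subword of `s_{n-1} s_{n-2}`.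
If `s_{n-1}` is absent from `τ`, then `σ` fixes every `m ≥ n` and has no descent at `n-1`.
If `τ = s_{n-1}`, take `ω' = α`. If `τ = s_{n-1} s_{n-2}`, a descent of `σ` at `n-1` is the same as
a descent of `α` at `n-2`, and the braid relation gives
`σ s_{n-1} = (α s_{n-2}) s_{n-1} s_{n-2}`; so induction on `n` applied to `α` yields `α'`, and
`ω' = α' s_{n-1} s_{n-2}`. Since the letters of `α` and `α'` are at most `n-2`, appending `s_{n-1}`
leaves `d` unchanged and appending `s_{n-1} s_{n-2}` adds one to it.

This recursion (`exists_shorter_subword`) produces a word one letter shorter than `ω`. Right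
multiplication by a simple transposition lowers the length by at most one, so if `ω` is reduced
then so is `ω'`.
-/


/-- The simple transposition `s i = (i, i+1)` acting on `ℕ` (1-based positions);
multiplying a permutation on the right by `st i` swaps the entries in positions
`i` and `i+1` of its one-line notation. -/
def st (i : ℕ) : Equiv.Perm ℕ := Equiv.swap i (i + 1)

/-- The permutation represented by a word, i.e. a list `[i₁, …, i_k]` of indices,
namely the product `s_{i₁} s_{i₂} ⋯ s_{i_k}`. -/
def wprod (l : List ℕ) : Equiv.Perm ℕ := (l.map st).prod

/-- `σ` belongs to the symmetric group `S_n` on `{1, …, n}`: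
it fixes `0` and every `m > n`. -/
def MemS (n : ℕ) (σ : Equiv.Perm ℕ) : Prop := ∀ m : ℕ, m < 1 ∨ n < m → σ m = m

/-- The Coxeter length `ℓ(σ)`: the minimal number of simple transpositions
`s_i` (`i ≥ 1`) in an expression of `σ` as their product. -/
noncomputable def len (σ : Equiv.Perm ℕ) : ℕ :=
  sInf {k : ℕ | ∃ l : List ℕ, (∀ i ∈ l, 1 ≤ i) ∧ l.length = k ∧ wprod l = σ}

/-- `l` is a reduced word: a word in the `s_i` (`i ≥ 1`) whose number of letters
equals the length of the permutation it represents. -/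
def Reduced (l : List ℕ) : Prop := (∀ i ∈ l, 1 ≤ i) ∧ l.length = len (wprod l)

/-- Bruhat order, characterized by the subword property: `u ≤ v` iff some
(equivalently, every) reduced expression of `v` has a subword (sublist) that is a
reduced expression of `u`. -/
def BruhatLE (u v : Equiv.Perm ℕ) : Prop :=
  ∃ l : List ℕ, Reduced l ∧ wprod l = v ∧
    ∃ l' : List ℕ, l'.Sublist l ∧ Reduced l' ∧ wprod l' = u

/-- `s_i ∈ D_R(σ)`, i.e. `σ(i) > σ(i+1)`. -/
def DR (σ : Equiv.Perm ℕ) (i : ℕ) : Prop := σ (i + 1) < σ i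

/-- The word `Ω_n = s_2 s_1 s_3 s_2 s_4 s_3 ⋯ s_{n-1} s_{n-2}`,
the concatenation of the blocks `s_j s_{j-1}` for `j = 2, …, n-1`. -/
def Omega (n : ℕ) : List ℕ := (List.range (n - 2)).flatMap fun j => [j + 2, j + 1]

/-- `d(ω)`: the number of indices `1 ≤ t < k` with `i_t - i_{t+1} = 1`,
for a word `ω = s_{i₁} ⋯ s_{i_k}`. -/
def dstat (l : List ℕ) : ℕ := (l.zip l.tail).countP fun p => p.1 == p.2 + 1

/-- `v` is the permutation of `S_n` with one-line notation `3 4 ⋯ n 1 2`. -/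
def IsVn (n : ℕ) (v : Equiv.Perm ℕ) : Prop :=
  (∀ i : ℕ, 1 ≤ i → i ≤ n - 2 → v i = i + 2) ∧ v (n - 1) = 1 ∧ v n = 2 ∧
    ∀ m : ℕ, m < 1 ∨ n < m → v m = m

lemma Omega_succ (m : ℕ) : Omega (m + 3) = Omega (m + 2) ++ [m + 2, m + 1] := by
  simp [Omega, List.range_succ]

lemma mem_Omega {m i : ℕ} (h : i ∈ Omega (m + 2)) : 1 ≤ i ∧ i ≤ m + 1 := by
  simp only [Omega, List.mem_flatMap, List.mem_range] at h
  obtain ⟨j, hj, hi⟩ := h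
  simp at hi
  omega

lemma wprod_append (l l' : List ℕ) : wprod (l ++ l') = wprod l * wprod l' := by
  simp [wprod]

lemma wprod_apply_of_lt (l : List ℕ) {b k : ℕ} (hl : ∀ i ∈ l, i ≤ b) (hk : b + 1 < k) :
    wprod l k = k := by
  induction l with
  | nil => simp [wprod]
  | cons a l ih =>
    have ha := hl a (by simp)
    have h := ih fun i hi => hl i (by simp [hi])
    have hcons : wprod (a :: l) = st a * wprod l := by simp [wprod]
    rw [hcons, Equiv.Perm.mul_apply, h]
    exact Equiv.swap_apply_of_ne_of_ne (by omega) (by omega)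

lemma not_DR_of_le (l : List ℕ) {b : ℕ} (hl : ∀ i ∈ l, i ≤ b) : ¬ DR (wprod l) (b + 1) := by
  intro h
  have h2 : wprod l (b + 1 + 1) = b + 1 + 1 := wprod_apply_of_lt l hl (by omega)
  unfold DR at h
  rw [h2] at h
  -- `σ (b+1)` would exceed `b+2`, hence be a fixed point of `σ`, hence equal `b+1`.
  have h3 : wprod l (wprod l (b + 1)) = wprod l (b + 1) := wprod_apply_of_lt l hl (by omega)
  have h4 := (wprod l).injective h3
  omega

lemma dstat_cons_cons (a b : ℕ) (l : List ℕ) :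
    dstat (a :: b :: l) = dstat (b :: l) + if a = b + 1 then 1 else 0 := by
  simp [dstat, List.countP_cons]

lemma dstat_append_cons (l l' : List ℕ) {c : ℕ} (hl : ∀ i ∈ l, i ≤ c) :
    dstat (l ++ c :: l') = dstat l + dstat (c :: l') := by
  induction l with
  | nil => simp [dstat]
  | cons a l ih =>
    have h := ih fun i hi => hl i (by simp [hi])
    have ha := hl a (by simp)
    cases l with
    | nil =>
      have h1 : dstat [a] = 0 := by simp [dstat]
      have h2 : a ≠ c + 1 := by omega
      simp [dstat_cons_cons, h1, h2]
    | cons b l =>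
      simp only [List.cons_append] at h ⊢
      rw [dstat_cons_cons, dstat_cons_cons, h]
      omega

lemma st_mul_self (i : ℕ) : st i * st i = 1 := Equiv.swap_mul_self _ _

lemma st_braid (i : ℕ) : st (i + 1) * st i * st (i + 1) = st i * st (i + 1) * st i := by
  ext k
  simp only [st, Equiv.Perm.mul_apply, Equiv.swap_apply_def]
  split_ifs <;> omega

lemma sublist_pair {a b : ℕ} {t : List ℕ} (h : t.Sublist [a, b]) :
    t = [] ∨ t = [b] ∨ t = [a] ∨ t = [a, b] := by
  have := List.mem_sublists.2 h
  simp [List.sublists] at this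
  tauto

/-- The combinatorial core, with no reducedness or Bruhat hypothesis: a subword of `Ω_{m+2}` with a
descent at the top position can be shortened by one letter, inside `Ω_{m+2}` and with `d`
unchanged. -/
lemma exists_shorter_subword (m : ℕ) : ∀ ω : List ℕ, ω.Sublist (Omega (m + 2)) →
    DR (wprod ω) (m + 1) →
    ∃ ω' : List ℕ, wprod ω' = wprod ω * st (m + 1) ∧ ω'.Sublist (Omega (m + 2)) ∧
      dstat ω' = dstat ω ∧ ω'.length + 1 = ω.length := by
  induction m with
  | zero =>
    intro ω hsub hd
    have h0 : ω = [] := by simpa [Omega] using hsub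
    subst h0
    simp [DR, wprod] at hd
  | succ m ih =>
    intro ω hsub hd
    rw [Omega_succ] at hsub ⊢
    obtain ⟨α, τ, rfl, hα, hτ⟩ := List.sublist_append_iff.1 hsub
    have hαb : ∀ i ∈ α, i ≤ m + 1 := fun i hi => (mem_Omega (hα.subset hi)).2
    have hαb' : ∀ i ∈ α, i ≤ m + 2 := fun i hi => (hαb i hi).trans (by omega)
    have hs1 : wprod [m + 2] = st (m + 2) := by simp [wprod]
    have hs2 : wprod [m + 2, m + 1] = st (m + 2) * st (m + 1) := by simp [wprod]
    rcases sublist_pair hτ with rfl | rfl | rfl | rfl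
    · exact absurd hd (not_DR_of_le _ (by simpa using hαb))
    · refine absurd hd (not_DR_of_le _ fun i hi => ?_)
      rcases List.mem_append.1 hi with hi | hi
      · exact hαb i hi
      · simp at hi
        omega
    · refine ⟨α, ?_, hα.trans (List.sublist_append_left _ _), ?_, by simp⟩
      · rw [wprod_append, hs1, mul_assoc, st_mul_self, mul_one]
      · rw [dstat_append_cons _ _ hαb']
        simp [dstat]
    · have hd' : DR (wprod α) (m + 1) := by
        have e1 : (st (m + 2) * st (m + 1)) (m + 1 + 1 + 1) = m + 1 + 1 := by
          simp only [st, Equiv.Perm.mul_apply, Equiv.swap_apply_def]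
          split_ifs <;> omega
        have e2 : (st (m + 2) * st (m + 1)) (m + 1 + 1) = m + 1 := by
          simp only [st, Equiv.Perm.mul_apply, Equiv.swap_apply_def]
          split_ifs <;> omega
        unfold DR at hd ⊢
        rwa [wprod_append, hs2, Equiv.Perm.mul_apply (wprod α), Equiv.Perm.mul_apply (wprod α),
          e1, e2] at hd
      obtain ⟨β, hβ, hβs, hβd, hβl⟩ := ih α hα hd'
      have hβb : ∀ i ∈ β, i ≤ m + 2 := fun i hi =>
        (mem_Omega (hβs.subset hi)).2.trans (by omega)
      refine ⟨β ++ [m + 2, m + 1], ?_, hβs.append_right _, ?_, ?_⟩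
      · rw [wprod_append, wprod_append, hβ, hs2]
        have hb := st_braid (m + 1)
        calc wprod α * st (m + 1) * (st (m + 2) * st (m + 1))
            = wprod α * (st (m + 1) * st (m + 1 + 1) * st (m + 1)) := by
              simp only [mul_assoc]
          _ = wprod α * (st (m + 2) * st (m + 1)) * st (m + 1 + 1) := by
              rw [← hb]
              simp only [mul_assoc]
      · rw [dstat_append_cons _ _ hβb, dstat_append_cons _ _ hαb', hβd]
      · simp
        omega

lemma len_le_length (l : List ℕ) (hl : ∀ i ∈ l, 1 ≤ i) : len (wprod l) ≤ l.length :=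
  Nat.sInf_le ⟨l, hl, rfl, rfl⟩

/-- The infimum defining `len` is attained on permutations represented by some word. -/
lemma exists_length_eq_len (l : List ℕ) (hl : ∀ i ∈ l, 1 ≤ i) :
    ∃ l' : List ℕ, (∀ i ∈ l', 1 ≤ i) ∧ l'.length = len (wprod l) ∧ wprod l' = wprod l :=
  Nat.sInf_mem (s := {k : ℕ | ∃ l' : List ℕ, (∀ i ∈ l', 1 ≤ i) ∧ l'.length = k ∧
    wprod l' = wprod l}) ⟨l.length, l, hl, rfl, rfl⟩

/-- Otherwise a shorter expression of `l'`, followed by `s_i`, would be an expression of `wprod l`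
shorter than `l`. -/
lemma reduced_of_length_succ {l l' : List ℕ} {i : ℕ} (hi : 1 ≤ i) (hl : Reduced l)
    (hl' : ∀ j ∈ l', 1 ≤ j) (he : wprod l' = wprod l * st i) (hlen : l'.length + 1 = l.length) :
    Reduced l' := by
  refine ⟨hl', le_antisymm ?_ (len_le_length l' hl')⟩
  obtain ⟨r, hr, hrl, hrw⟩ := exists_length_eq_len l' hl'
  have hw : wprod (r ++ [i]) = wprod l := by
    have hs : wprod [i] = st i := by simp [wprod]
    rw [wprod_append, hrw, he, hs, mul_assoc, st_mul_self, mul_one]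
  have h := len_le_length (r ++ [i]) (by
    intro j hj
    rcases List.mem_append.1 hj with hj | hj
    · exact hr j hj
    · simp at hj
      omega)
  rw [hw, ← hl.2, List.length_append, List.length_singleton] at h
  omega

/-- Let `ω` be a reduced subword of `Ω_n` and `σ` the permutation it represents.
If `σ s_{n-1} ≤ v_n` in the Bruhat order and `s_{n-1} ∈ D_R(σ)`, then there is a
reduced expression `ω'` of `σ s_{n-1}` which is a subword of `Ω_n` with
`d(ω') = d(ω)`. -/
theorem lemma1 (n : ℕ) (hn : 3 ≤ n) (v : Equiv.Perm ℕ) (hv : IsVn n v)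
    (ω : List ℕ) (hsub : ω.Sublist (Omega n)) (hred : Reduced ω)
    (hble : BruhatLE (wprod ω * st (n - 1)) v)
    (hdes : DR (wprod ω) (n - 1)) :
    ∃ ω' : List ℕ, Reduced ω' ∧ wprod ω' = wprod ω * st (n - 1) ∧
      ω'.Sublist (Omega n) ∧ dstat ω' = dstat ω := by
  obtain ⟨m, rfl⟩ : ∃ m, n = m + 2 := ⟨n - 2, by omega⟩
  obtain ⟨ω', hw, hs, hdst, hlen⟩ := exists_shorter_subword m ω hsub hdes
  exact ⟨ω', reduced_of_length_succ (by omega) hred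
    (fun j hj => (mem_Omega (hs.subset hj)).1) hw hlen, hw, hs, hdst⟩
end

section
/- Let n ≥ 3 and let σ ∈ S_n satisfy σ(n) = n. If σ s_{n−1} ≤ v_n in the Bruhat order, then σ ≤ v̂_{n−1}, where v̂_{n−1} ∈ S_n is the permutation with one-line notation 3 4 ⋯ (n−1) 1 2 n (the image of v_{n−1} under the standard embedding S_{n−1} ↪ S_n fixing n). -/
lemma wprod_nil : wprod [] = 1 := rfl

lemma wprod_cons (i : ℕ) (l : List ℕ) : wprod (i :: l) = st i * wprod l := by
  simp [wprod]

lemma st_apply (i x : ℕ) : st i x = if x = i then i + 1 else if x = i + 1 then i else x :=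
  Equiv.swap_apply_def _ _ _

lemma wprod_fix {l : List ℕ} {x : ℕ} (h : ∀ i ∈ l, i + 1 < x) : wprod l x = x := by
  induction l with
  | nil => rfl
  | cons i l ih =>
    have h1 := h i (by simp)
    rw [wprod_cons, Equiv.Perm.mul_apply, ih (fun j hj => h j (by simp [hj])), st_apply]
    grind

/-- A permutation fixing both `i` and `i + 1` commutes with `s_i`. -/
lemma comm_st {w : Equiv.Perm ℕ} {i : ℕ} (h1 : w i = i) (h2 : w (i + 1) = i + 1) :
    w * st i = st i * w := by
  have := Equiv.mul_swap_eq_swap_mul w i (i + 1)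
  rwa [h1, h2] at this

lemma len_le {l : List ℕ} (h : ∀ i ∈ l, 1 ≤ i) : len (wprod l) ≤ l.length :=
  Nat.sInf_le ⟨l, h, rfl, rfl⟩

/-- The assumption that `w` has a word rules out the junk value `sInf ∅ = 0` of `len w`. -/
lemma len_mul_st_le {w : Equiv.Perm ℕ} {i : ℕ} (hi : 1 ≤ i)
    (hw : ∃ l : List ℕ, (∀ j ∈ l, 1 ≤ j) ∧ wprod l = w) : len (w * st i) ≤ len w + 1 := by
  obtain ⟨l, hl, rfl⟩ := hw
  obtain ⟨l₁, h1, h2, h3⟩ := Nat.sInf_mem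
    (s := {k : ℕ | ∃ l' : List ℕ, (∀ i ∈ l', 1 ≤ i) ∧ l'.length = k ∧ wprod l' = wprod l})
    ⟨l.length, l, hl, rfl, rfl⟩
  change l₁.length = len (wprod l) at h2
  rw [← h2, ← h3]
  have := len_le (l := l₁ ++ [i]) (by grind)
  simpa [wprod_append, wprod_cons, wprod_nil] using this

/-- The number of positions `≤ k` at which `w` takes a value `> k`. -/
def cross (k : ℕ) (w : Equiv.Perm ℕ) : ℕ := ((Finset.range (k + 1)).filter fun x => k < w x).card

lemma cross_le_count (k : ℕ) (l : List ℕ) : cross k (wprod l) ≤ l.count k := by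
  induction l with
  | nil =>
    refine (Finset.card_eq_zero.2 (Finset.filter_eq_empty_iff.2 fun x hx => ?_)).le
    rw [wprod_nil, Equiv.Perm.one_apply]
    have := Finset.mem_range.1 hx
    omega
  | cons i l ih =>
    by_cases hik : i = k
    · subst hik
      rw [List.count_cons_self]
      refine le_trans ?_ (Nat.succ_le_succ ih)
      -- Only the position with value `i` can become a new crossing.
      refine le_trans (Finset.card_le_card (t := insert ((wprod l).symm i)
        ((Finset.range (i + 1)).filter fun x => i < wprod l x)) ?_) (Finset.card_insert_le _ _)
      intro x hx
      simp only [Finset.mem_filter, Finset.mem_insert, wprod_cons, Equiv.Perm.mul_apply,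
        st_apply] at hx ⊢
      rw [Equiv.eq_symm_apply]
      grind
    · rw [List.count_cons_of_ne hik]
      refine le_trans (Finset.card_le_card ?_) ih
      intro x hx
      simp only [Finset.mem_filter, wprod_cons, Equiv.Perm.mul_apply, st_apply] at hx ⊢
      grind

lemma IsVn.eq_mul {m : ℕ} {v vhat : Equiv.Perm ℕ} (hv : IsVn (m + 3) v) (hh : IsVn (m + 2) vhat) :
    v = vhat * st (m + 2) * st (m + 1) := by
  obtain ⟨a1, a2, a3, a4⟩ := hv
  obtain ⟨b1, b2, b3, b4⟩ := hh
  ext x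
  simp only [Equiv.Perm.mul_apply, st_apply]
  have := a1 x
  have := b1 x
  have := a4 x
  have := b4 x
  have := b4 (m + 3)
  grind

lemma IsVn.mul {m : ℕ} {v : Equiv.Perm ℕ} (hv : IsVn (m + 3) v) :
    IsVn (m + 2) (v * st (m + 1) * st (m + 2)) := by
  obtain ⟨a1, a2, a3, a4⟩ := hv
  refine ⟨fun i h1 h2 => ?_, ?_, ?_, fun i hi => ?_⟩
  all_goals simp only [Equiv.Perm.mul_apply, st_apply]
  · have := a1 i
    grind
  · grind
  · grind
  · have := a4 i
    have := a1 (m + 1)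
    grind

lemma IsVn.exists_word (m : ℕ) : ∀ v : Equiv.Perm ℕ, IsVn (m + 2) v →
    ∃ l : List ℕ, (∀ i ∈ l, 1 ≤ i) ∧ l.length = 2 * m ∧ wprod l = v := by
  induction m with
  | zero =>
    rintro v ⟨a1, a2, a3, a4⟩
    refine ⟨[], by simp, rfl, ?_⟩
    ext x
    have := a4 x
    simp only [wprod_nil, Equiv.Perm.one_apply]
    grind
  | succ m ih =>
    intro v hv
    obtain ⟨l, h1, h2, h3⟩ := ih _ hv.mul
    refine ⟨l ++ [m + 2, m + 1], by grind, by grind, ?_⟩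
    rw [wprod_append, h3, wprod_cons, wprod_cons, wprod_nil, mul_one, mul_assoc,
      ← mul_assoc (st (m + 2)), st_mul_self, one_mul, mul_assoc, st_mul_self, mul_one]

/-- The multiplicity of the letter `k` in every reduced word of `v_{m+3}`. -/
def mult (m k : ℕ) : ℕ :=
  (if k ∈ Finset.Icc 1 (m + 2) then 1 else 0) + (if k ∈ Finset.Icc 2 (m + 1) then 1 else 0)

lemma IsVn.mult_le_cross {m : ℕ} {v : Equiv.Perm ℕ} (hv : IsVn (m + 3) v) (k : ℕ) :
    mult m k ≤ cross k v := by
  obtain ⟨a1, a2, a3, a4⟩ := hv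
  unfold mult cross
  by_cases h2 : k ∈ Finset.Icc 2 (m + 1)
  · have h1 : k ∈ Finset.Icc 1 (m + 2) := by simp at h2 ⊢; omega
    rw [if_pos h1, if_pos h2]
    simp only [Finset.mem_Icc] at h2
    have hc : ({k - 1, k} : Finset ℕ).card = 2 := Finset.card_pair (by omega)
    refine hc.symm.le.trans ?_
    refine Finset.card_le_card fun x hx => ?_
    have := a1 x
    simp only [Finset.mem_insert, Finset.mem_singleton, Finset.mem_filter, Finset.mem_range] at hx ⊢
    grind
  · rw [if_neg h2]
    split_ifs with h1
    · simp only [Finset.mem_Icc] at h1 h2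
      refine Finset.card_pos.2 ⟨if k = 1 then 1 else m + 1, ?_⟩
      have := a1 1
      have := a1 (m + 1)
      simp only [Finset.mem_filter, Finset.mem_range]
      grind
    · exact Nat.zero_le _

/-- The lower bounds on the multiplicities of the letters sum to the length of `v_{m+3}`, so they
are attained. -/
lemma IsVn.count_eq {m : ℕ} {v : Equiv.Perm ℕ} (hv : IsVn (m + 3) v) {l : List ℕ}
    (hl : Reduced l) (hlv : wprod l = v) (k : ℕ) : l.count k = mult m k := by
  have hlen : l.length ≤ 2 * (m + 1) := by
    obtain ⟨l₀, h1, h2, h3⟩ := IsVn.exists_word (m + 1) v hv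
    rw [hl.2, hlv, ← h2, ← h3]
    exact len_le h1
  have hle : ∀ j, mult m j ≤ l.count j := fun j =>
    (hv.mult_le_cross j).trans (hlv ▸ cross_le_count j l)
  set S : Finset ℕ := insert k (l.toFinset ∪ Finset.Icc 1 (m + 2)) with hS
  have hsum : ∑ j ∈ S, l.count j = l.length := by
    have := Multiset.sum_count_eq_card (s := S) (m := (l : Multiset ℕ)) (by
      intro a ha
      simp only [Multiset.mem_coe] at ha
      simp [hS, ha])
    simpa only [Multiset.coe_count, Multiset.coe_card] using this
  have hmult : ∑ j ∈ S, mult m j = 2 * (m + 1) := by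
    unfold mult
    rw [Finset.sum_add_distrib, Finset.sum_ite_mem, Finset.sum_ite_mem,
      Finset.inter_eq_right.2, Finset.inter_eq_right.2]
    · simp; omega
    · intro x hx
      simp [hS] at hx ⊢
      omega
    · intro x hx
      simp [hS] at hx ⊢
      omega
  have heq := (Finset.sum_eq_sum_iff_of_le (s := S) fun j _ => hle j).1
    (le_antisymm (Finset.sum_le_sum fun j _ => hle j) (by omega))
  exact (heq k (by simp [hS])).symm

/-- The shape of a reduced word of `v_{m+3}`. -/
lemma IsVn.word_shape {m : ℕ} {v : Equiv.Perm ℕ} (hv : IsVn (m + 3) v) {l : List ℕ}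
    (hl : Reduced l) (hlv : wprod l = v) :
    ∃ A B₁ B₂ : List ℕ, l = A ++ (m + 2) :: (B₁ ++ (m + 1) :: B₂) ∧ (∀ i ∈ A, i < m + 2) ∧
      (∀ i ∈ B₁, i < m + 1) ∧ (∀ i ∈ B₂, i < m + 1) ∧ wprod B₂ (m + 1) = m + 1 := by
  have hc := hv.count_eq hl hlv
  have hm : ∀ i ∈ l, i ≤ m + 2 := by
    intro i hi
    have := List.count_pos_iff.2 hi
    rw [hc i] at this
    simp only [mult, Finset.mem_Icc] at this
    grind
  have hc2 : l.count (m + 2) = 1 := by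
    rw [hc]; simp [mult]
  have hc1 : l.count (m + 1) = if m = 0 then 1 else 2 := by
    rw [hc]; simp only [mult, Finset.mem_Icc]; grind
  obtain ⟨a1, a2, a3, a4⟩ := hv
  obtain ⟨A, B, rfl⟩ := List.append_of_mem (List.count_pos_iff.1 (by omega : 0 < l.count (m + 2)))
  simp only [List.count_append, List.count_cons_self] at hc2
  have hA2 : m + 2 ∉ A := List.count_eq_zero.1 (by omega)
  have hB2 : m + 2 ∉ B := List.count_eq_zero.1 (by omega)
  have hA : ∀ i ∈ A, i < m + 2 := fun i hi => by
    have := hm i (by simp [hi])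
    have : i ≠ m + 2 := by rintro rfl; exact hA2 hi
    omega
  have hB : ∀ i ∈ B, i < m + 2 := fun i hi => by
    have := hm i (by simp [hi])
    have : i ≠ m + 2 := by rintro rfl; exact hB2 hi
    omega
  have hvx : ∀ x, v x = wprod A (st (m + 2) (wprod B x)) := by
    intro x
    rw [← hlv, wprod_append, wprod_cons, Equiv.Perm.mul_apply, Equiv.Perm.mul_apply]
  have hAn : wprod A (m + 3) = m + 3 := wprod_fix fun i hi => by have := hA i hi; omega
  have hBn : wprod B (m + 3) = m + 3 := wprod_fix fun i hi => by have := hB i hi; omega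
  have hBmem : m + 1 ∈ B := by
    by_contra hcon
    have hfix : wprod B (m + 2) = m + 2 := wprod_fix fun i hi => by
      have := hB i hi
      have : i ≠ m + 1 := by rintro rfl; exact hcon hi
      omega
    have := hvx (m + 2)
    rw [hfix, st_apply, if_pos rfl, hAn] at this
    grind
  have hAmem : m ≠ 0 → m + 1 ∈ A := by
    intro hm0
    by_contra hcon
    have hfix : wprod A (m + 2) = m + 2 := wprod_fix fun i hi => by
      have := hA i hi
      have : i ≠ m + 1 := by rintro rfl; exact hcon hi
      omega
    have := hvx (m + 3)
    rw [hBn, st_apply, if_neg (by omega), if_pos rfl, hfix] at this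
    grind
  have hBc : B.count (m + 1) = 1 := by
    have h1 := List.count_pos_iff.2 hBmem
    simp only [List.count_append, List.count_cons_of_ne (show m + 2 ≠ m + 1 by omega)] at hc1
    by_cases hm0 : m = 0
    · rw [if_pos hm0] at hc1; omega
    · have h2 := List.count_pos_iff.2 (hAmem hm0)
      rw [if_neg hm0] at hc1
      omega
  obtain ⟨B₁, B₂, rfl⟩ := List.append_of_mem hBmem
  simp only [List.count_append, List.count_cons_self] at hBc
  have h1 : m + 1 ∉ B₁ := List.count_eq_zero.1 (by omega)
  have h2 : m + 1 ∉ B₂ := List.count_eq_zero.1 (by omega)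
  have hB₁ : ∀ i ∈ B₁, i < m + 1 := fun i hi => by
    have := hB i (by simp [hi])
    have : i ≠ m + 1 := by rintro rfl; exact h1 hi
    omega
  have hB₂ : ∀ i ∈ B₂, i < m + 1 := fun i hi => by
    have := hB i (by simp [hi])
    have : i ≠ m + 1 := by rintro rfl; exact h2 hi
    omega
  refine ⟨A, B₁, B₂, rfl, hA, hB₁, hB₂, ?_⟩
  -- Undo `A`, `s_{m+2}`, `B₁`, `s_{m+1}` one after the other, starting from `v (m + 1) = m + 3`.
  have e1 : v (m + 1) = m + 3 := a1 (m + 1) (by omega) (by omega)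
  rw [hvx] at e1
  have e2 := (wprod A).injective (e1.trans hAn.symm)
  rw [wprod_append, wprod_cons, Equiv.Perm.mul_apply, Equiv.Perm.mul_apply] at e2
  have e3 : wprod B₁ (st (m + 1) (wprod B₂ (m + 1))) = m + 2 := by
    rw [st_apply (m + 2)] at e2
    grind
  have hB₁n : wprod B₁ (m + 2) = m + 2 := wprod_fix fun i hi => by have := hB₁ i hi; omega
  have e4 := (wprod B₁).injective (e3.trans hB₁n.symm)
  rw [st_apply] at e4
  grind

/-- Removing `s_{m+2}` and `s_{m+1}` from such a word amounts to removing `s_{m+2} s_{m+1}` on the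
right. -/
lemma wprod_shape {m : ℕ} {A B₁ B₂ : List ℕ} (h1 : ∀ i ∈ B₁, i < m + 1) (h2 : ∀ i ∈ B₂, i < m + 1)
    (h3 : wprod B₂ (m + 1) = m + 1) :
    wprod (A ++ (m + 2) :: (B₁ ++ (m + 1) :: B₂)) =
      wprod (A ++ (B₁ ++ B₂)) * st (m + 2) * st (m + 1) := by
  have f : ∀ {B : List ℕ}, (∀ i ∈ B, i < m + 1) → ∀ x, m + 2 ≤ x → wprod B x = x :=
    fun hB x hx => wprod_fix fun i hi => by have := hB i hi; omega
  have c1 := comm_st (f h1 (m + 2) le_rfl) (f h1 (m + 2 + 1) (by omega))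
  have c2 := comm_st (f h2 (m + 2) le_rfl) (f h2 (m + 2 + 1) (by omega))
  have c3 := comm_st h3 (f h2 (m + 1 + 1) le_rfl)
  simp only [wprod_append, wprod_cons, mul_assoc]
  rw [← c3, ← mul_assoc (st (m + 2)) (wprod B₁), ← c1, ← mul_assoc (wprod B₂) (st (m + 2)), c2]
  simp only [mul_assoc]

lemma sublist_split {a : ℕ} {l A B : List ℕ} (h : l.Sublist (A ++ a :: B)) :
    l.Sublist (A ++ B) ∨ ∃ l₁ l₂, l = l₁ ++ a :: l₂ ∧ l₁.Sublist A ∧ l₂.Sublist B := by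
  obtain ⟨l₁, l₂, rfl, h1, h2⟩ := List.sublist_append_iff.1 h
  rcases List.sublist_cons_iff.1 h2 with h2 | ⟨r, rfl, hr⟩
  · exact Or.inl (h1.append h2)
  · exact Or.inr ⟨l₁, r, rfl, h1, hr⟩

/-- Let `σ ∈ S_n` with `σ(n) = n`. If `σ s_{n-1} ≤ v_n` in the Bruhat order,
then `σ ≤ v̂_{n-1}`, where `v̂_{n-1} ∈ S_n` has one-line notation
`3 4 ⋯ (n-1) 1 2 n`. -/
theorem le_vhat_of_mul_le_vn (n : ℕ) (hn : 3 ≤ n) (v vhat : Equiv.Perm ℕ)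
    (hv : IsVn n v) (hvhat : IsVn (n - 1) vhat)
    (σ : Equiv.Perm ℕ) (hσ : MemS n σ) (hfix : σ n = n)
    (h : BruhatLE (σ * st (n - 1)) v) :
    BruhatLE σ vhat := by
  obtain ⟨m, rfl⟩ : ∃ m, n = m + 3 := ⟨n - 3, by omega⟩
  change IsVn (m + 2) vhat at hvhat
  change BruhatLE (σ * st (m + 2)) v at h
  obtain ⟨l, hl, hlv, l', hsub, hl', hlσ⟩ := h
  obtain ⟨A, B₁, B₂, rfl, hA, hB₁, hB₂, hfixB⟩ := hv.word_shape hl hlv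
  have hvh : wprod (A ++ (B₁ ++ B₂)) = vhat := by
    have := hlv.trans (hv.eq_mul hvhat)
    rw [wprod_shape hB₁ hB₂ hfixB] at this
    exact mul_right_cancel (mul_right_cancel this)
  -- `σ s_{m+2}` moves `m + 3`, so its word contains the letter `m + 2`.
  have hσn : wprod l' (m + 3) ≠ m + 3 := by
    rw [hlσ, Equiv.Perm.mul_apply, st_apply, if_neg (by omega), if_pos rfl]
    intro hcon
    have := σ.injective (hcon.trans hfix.symm)
    omega
  rcases sublist_split hsub with hs | ⟨a, b, rfl, ha, hb⟩
  · refine absurd (wprod_fix fun i hi => ?_) hσn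
    have := hs.subset hi
    grind
  have han : wprod a (m + 3) = m + 3 := wprod_fix fun i hi => by
    have := hA i (ha.subset hi); omega
  have hbn : wprod b (m + 3) = m + 3 := wprod_fix fun i hi => by
    have := hb.subset hi; grind
  have hb2 : wprod b (m + 2) = m + 2 := by
    have e : wprod (a ++ (m + 2) :: b) (m + 2) = m + 3 := by
      rw [hlσ, Equiv.Perm.mul_apply, st_apply, if_pos rfl]
      exact hfix
    rw [wprod_append, wprod_cons, Equiv.Perm.mul_apply, Equiv.Perm.mul_apply] at e
    have e2 := (wprod a).injective (e.trans han.symm)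
    rw [st_apply] at e2
    grind
  have hbs : b.Sublist (B₁ ++ B₂) := by
    rcases sublist_split hb with hs | ⟨b₁, b₂, rfl, h1, h2⟩
    · exact hs
    · exfalso
      have f1 : wprod b₁ (m + 2) = m + 2 := wprod_fix fun i hi => by
        have := hB₁ i (h1.subset hi); omega
      have f2 : wprod b₂ (m + 2) = m + 2 := wprod_fix fun i hi => by
        have := hB₂ i (h2.subset hi); omega
      rw [wprod_append, wprod_cons, Equiv.Perm.mul_apply, Equiv.Perm.mul_apply, f2, st_apply,
        if_neg (by omega), if_pos rfl] at hb2
      have := (wprod b₁).injective (hb2.trans f1.symm)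
      omega
  have hab : wprod (a ++ b) = σ := by
    have c := comm_st hb2 hbn
    rw [wprod_append, wprod_cons, ← c, ← mul_assoc] at hlσ
    rw [wprod_append]
    exact mul_right_cancel hlσ
  have p1 : ∀ i ∈ A ++ (B₁ ++ B₂), 1 ≤ i := fun i hi => hl.1 i (by grind)
  have p2 : ∀ i ∈ a ++ b, 1 ≤ i := fun i hi => hl'.1 i (by grind)
  refine ⟨A ++ (B₁ ++ B₂), ⟨p1, le_antisymm ?_ (len_le p1)⟩, hvh, a ++ b, ha.append hbs,
    ⟨p2, le_antisymm ?_ (len_le p2)⟩, hab⟩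
  · have q1 := len_mul_st_le (i := m + 2) (by omega) ⟨_, p1, rfl⟩
    have q2 := len_mul_st_le (w := wprod (A ++ (B₁ ++ B₂)) * st (m + 2)) (i := m + 1) (by omega)
      ⟨(A ++ (B₁ ++ B₂)) ++ [m + 2], by grind, by
        rw [wprod_append _ [m + 2], wprod_cons, wprod_nil, mul_one]⟩
    have q3 := hl.2
    rw [wprod_shape hB₁ hB₂ hfixB] at q3
    simp only [List.length_append, List.length_cons] at q3 ⊢
    omega
  · have q1 := len_mul_st_le (i := m + 2) (by omega) ⟨_, p2, rfl⟩
    have q3 := hl'.2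
    rw [hlσ, ← hab] at q3
    simp only [List.length_append, List.length_cons] at q3 ⊢
    omega
end

section
/- Let n ≥ 3 and let τ ∈ S_n. If τ ≤ v̂_{n−1} in the Bruhat order, where v̂_{n−1} ∈ S_n is the permutation with one-line notation 3 4 ⋯ (n−1) 1 2 n, then τ s_{n−1} s_{n−2} ≤ v_n. -/
lemma wprod_singleton (i : ℕ) : wprod [i] = st i := by
  simp [wprod]

lemma st_left (i : ℕ) : st i i = i + 1 := Equiv.swap_apply_left _ _

lemma st_right (i : ℕ) : st i (i + 1) = i := Equiv.swap_apply_right _ _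

lemma st_ne {i m : ℕ} (h : m ≠ i) (h' : m ≠ i + 1) : st i m = m :=
  Equiv.swap_apply_of_ne_of_ne h h'

/-- The exchange property: a descent of the permutation of a word is removed by deleting one
letter of the word. -/
lemma exchange (l : List ℕ) (i : ℕ) (h : wprod l (i + 1) < wprod l i) :
    ∃ l' : List ℕ, l'.Sublist l ∧ l'.length + 1 = l.length ∧ wprod l' = wprod l * st i := by
  induction l with
  | nil => simp [wprod] at h
  | cons j l ih =>
    by_cases hd : wprod l (i + 1) < wprod l i
    · obtain ⟨l', hs, hl, hw⟩ := ih hd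
      exact ⟨j :: l', hs.cons_cons j, by simp [hl], by rw [wprod_cons, wprod_cons, hw, mul_assoc]⟩
    · -- `s_j` reverses the order of the values at `i`, `i + 1`, so these are `j`, `j + 1`,
      -- and deleting `j` works.
      have hne : wprod l i ≠ wprod l (i + 1) := fun e => by
        have := (wprod l).injective e
        omega
      rw [wprod_cons, Equiv.Perm.mul_apply, Equiv.Perm.mul_apply] at h
      have key : wprod l i = j ∧ wprod l (i + 1) = j + 1 := by
        simp only [st, Equiv.swap_apply_def] at h
        split_ifs at h <;> omega
      refine ⟨l, List.sublist_cons_self j l, by simp, ?_⟩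
      have hconj : wprod l * st i = st j * wprod l := by
        rw [st, Equiv.mul_swap_eq_swap_mul, key.1, key.2, st]
      rw [wprod_cons, mul_assoc, hconj, ← mul_assoc, st_mul_self, one_mul]

lemma reduced_iff (l : List ℕ) : Reduced l ↔ (∀ i ∈ l, 1 ≤ i) ∧
    ∀ w : List ℕ, (∀ i ∈ w, 1 ≤ i) → wprod w = wprod l → l.length ≤ w.length := by
  refine and_congr_right fun hl => ⟨fun h w hw e => ?_, fun h => ?_⟩
  · rw [h]
    exact Nat.sInf_le ⟨w, hw, rfl, e⟩
  · refine le_antisymm ?_ (Nat.sInf_le ⟨l, hl, rfl, rfl⟩)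
    refine le_csInf ⟨_, l, hl, rfl, rfl⟩ ?_
    rintro k ⟨w, hw, rfl, e⟩
    exact h w hw e

lemma Reduced.of_append {l : List ℕ} {i : ℕ} (h : Reduced (l ++ [i])) : Reduced l := by
  rw [reduced_iff] at h ⊢
  refine ⟨fun j hj => h.1 j (by simp [hj]), fun w hw e => ?_⟩
  have := h.2 (w ++ [i]) (fun j hj => ?_) (by rw [wprod_append, wprod_append, e])
  · simpa using this
  · rcases List.mem_append.1 hj with hj | hj
    · exact hw j hj
    · exact h.1 j (by simp_all)

/-- The last letter of a reduced word is a descent of its permutation. -/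
lemma Reduced.descent {l : List ℕ} {i : ℕ} (h : Reduced (l ++ [i])) :
    wprod (l ++ [i]) (i + 1) < wprod (l ++ [i]) i := by
  by_contra hc
  have hd : wprod l (i + 1) < wprod l i := by
    have hne : wprod l i ≠ wprod l (i + 1) := fun e => by
      have := (wprod l).injective e
      omega
    rw [wprod_append, wprod_singleton, Equiv.Perm.mul_apply, Equiv.Perm.mul_apply, st_left,
      st_right] at hc
    omega
  obtain ⟨w, hs, hl, hw⟩ := exchange l i hd
  have := ((reduced_iff _).1 h).2 w (fun j hj => h.1 j (by simp [hs.subset hj]))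
    (by rw [hw, wprod_append, wprod_singleton])
  simp at this
  omega

lemma Reduced.append_ascent {l : List ℕ} {i : ℕ} (h : Reduced l) (hi : 1 ≤ i)
    (ha : wprod l i < wprod l (i + 1)) : Reduced (l ++ [i]) := by
  rw [reduced_iff] at h ⊢
  refine ⟨fun j hj => ?_, fun w hw e => ?_⟩
  · rcases List.mem_append.1 hj with hj | hj
    · exact h.1 j hj
    · simp_all
  · rw [wprod_append, wprod_singleton] at e
    obtain ⟨w', hs, hl, hw'⟩ := exchange w i (by
      rwa [e, Equiv.Perm.mul_apply, Equiv.Perm.mul_apply, st_left, st_right])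
    have := h.2 w' (fun j hj => hw j (hs.subset hj))
      (by rw [hw', e, mul_assoc, st_mul_self, mul_one])
    simp
    omega

lemma apply_lt_of_fixes {σ : Equiv.Perm ℕ} {n : ℕ} (hσ : ∀ m, n ≤ m → σ m = m) {m : ℕ}
    (hm : m < n) : σ m < n := by
  by_contra hc
  have := σ.injective (hσ (σ m) (by omega))
  omega

/-- A reduced word of a permutation fixing every `m ≥ n` lies in `s_1, …, s_{n-2}`. -/
lemma Reduced.letters_lt {l : List ℕ} {n : ℕ} (h : Reduced l)
    (hf : ∀ m, n ≤ m → wprod l m = m) : ∀ i ∈ l, i + 1 < n := by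
  induction l using List.reverseRecOn with
  | nil => simp
  | append_singleton l i ih =>
    have hd := h.descent
    have hi : i + 1 < n := by
      by_contra hc
      rw [hf (i + 1) (by omega)] at hd
      by_cases hin : n ≤ i
      · rw [hf i hin] at hd
        omega
      · have := apply_lt_of_fixes hf (m := i) (by omega)
        omega
    intro j hj
    rcases List.mem_append.1 hj with hj | hj
    · refine ih h.of_append (fun m hm => ?_) j hj
      have := hf m hm
      rwa [wprod_append, wprod_singleton, Equiv.Perm.mul_apply,
        st_ne (by omega) (by omega)] at this
    · simp_all

lemma wprod_fixes {l : List ℕ} {n : ℕ} (h : ∀ i ∈ l, i + 1 < n) :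
    ∀ m, n ≤ m → wprod l m = m := by
  induction l with
  | nil => simp [wprod]
  | cons j l ih =>
    intro m hm
    have hj := h j (by simp)
    rw [wprod_cons, Equiv.Perm.mul_apply, ih (fun i hi => h i (by simp [hi])) m hm,
      st_ne (by omega) (by omega)]

/-- A reduced word in `s_1, …, s_{n-2}` stays reduced when `s_{n-1} s_{n-2}` is appended;
here `n = k + 3`. -/
lemma Reduced.append_pair {l : List ℕ} {k : ℕ} (h : Reduced l) (hl : ∀ i ∈ l, i + 1 < k + 3) :
    Reduced (l ++ [k + 2] ++ [k + 1]) := by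
  have hf := wprod_fixes hl
  have hn := hf (k + 3) le_rfl
  refine (h.append_ascent (by omega) ?_).append_ascent (by omega) ?_
  · rw [hn]
    exact apply_lt_of_fixes hf (by omega)
  · rw [wprod_append, wprod_singleton, Equiv.Perm.mul_apply, Equiv.Perm.mul_apply,
      st_left, st_ne (by omega) (by omega), hn]
    exact apply_lt_of_fixes hf (by omega)

lemma vn_eq_mul {k : ℕ} {v vhat : Equiv.Perm ℕ} (hv : IsVn (k + 3) v)
    (hvhat : IsVn (k + 2) vhat) : v = vhat * st (k + 2) * st (k + 1) := by
  obtain ⟨a1, a2, a3, a4⟩ := hv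
  obtain ⟨b1, b2, b3, b4⟩ := hvhat
  simp only [Nat.add_sub_cancel, Nat.add_succ_sub_one, Nat.reduceSubDiff] at a1 a2 b1 b2
  ext m
  rw [Equiv.Perm.mul_apply, Equiv.Perm.mul_apply]
  rcases (by omega : m < 1 ∨ (1 ≤ m ∧ m ≤ k) ∨ m = k + 1 ∨ m = k + 2 ∨ m = k + 3 ∨ k + 3 < m)
    with h | h | rfl | rfl | rfl | h
  · rw [st_ne (i := k + 1) (by omega) (by omega), st_ne (by omega) (by omega),
      a4 m (by omega), b4 m (by omega)]
  · rw [st_ne (i := k + 1) (by omega) (by omega), st_ne (by omega) (by omega),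
      a1 m (by omega) (by omega), b1 m (by omega) (by omega)]
  · rw [st_left, st_left, a1 _ (by omega) (by omega), b4 _ (by omega)]
  · rw [st_right, st_ne (by omega) (by omega), a2, b2]
  · rw [st_ne (i := k + 1) (by omega) (by omega), st_right, a3, b3]
  · rw [st_ne (i := k + 1) (by omega) (by omega), st_ne (by omega) (by omega),
      a4 m (by omega), b4 m (by omega)]

/-- Let `τ ∈ S_n`. If `τ ≤ v̂_{n-1}` in the Bruhat order, where
`v̂_{n-1} ∈ S_n` has one-line notation `3 4 ⋯ (n-1) 1 2 n`, then
`τ s_{n-1} s_{n-2} ≤ v_n`. -/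
theorem mul_le_vn_of_le_vhat (n : ℕ) (hn : 3 ≤ n) (v vhat : Equiv.Perm ℕ)
    (hv : IsVn n v) (hvhat : IsVn (n - 1) vhat)
    (τ : Equiv.Perm ℕ) (hτ : MemS n τ) (h : BruhatLE τ vhat) :
    BruhatLE (τ * st (n - 1) * st (n - 2)) v := by
  obtain ⟨k, rfl⟩ : ∃ k, n = k + 3 := ⟨n - 3, by omega⟩
  have hvv : v = vhat * st (k + 2) * st (k + 1) := vn_eq_mul hv hvhat
  obtain ⟨l, hl, hlv, l', hs, hl', rfl⟩ := h
  have hlt : ∀ i ∈ l, i + 1 < k + 3 := hl.letters_lt fun m hm => by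
    rw [hlv]
    exact hvhat.2.2.2 m (Or.inr (by omega))
  refine ⟨l ++ [k + 2] ++ [k + 1], hl.append_pair hlt, ?_, l' ++ [k + 2] ++ [k + 1],
    (hs.append_right _).append_right _, hl'.append_pair fun i hi => hlt i (hs.subset hi), ?_⟩
  · simp only [wprod_append, wprod_singleton, hlv, hvv]
  · simp only [wprod_append, wprod_singleton]
    rfl
end
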